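/- Positivity of strong solutions of the symmetrizable (Godunov) MHD system (Appendix A, Proposition): Let d ∈ {1,2,3}, γ > 1 and 0 < T ≤ ∞. Suppose ρ, p : ℝ^d × [0, T) → ℝ and v, B : ℝ^d × [0, T) → ℝ³ are continuously differentiable, the velocity v is bounded on ℝ^d × [0, τ] for every τ < T (so that the characteristics dx/dt = v(x, t) are globally defined on [0, τ]), and the conservative state U = (ρ, ρv, B, E) with E = ρ|v|²/2 + |B|²/2 + p/(γ−1) is a classical solution of the symmetrizable MHD system ∂_t U + Σ_{i=1}^{d} ∂_{x_i} F_i(U) = −(Σ_{i=1}^{d} ∂_{x_i} B_i)·S(U) on ℝ^d × (0, T). If ρ(x, 0) > 0 and p(x, 0) > 0 for all x ∈ ℝ^d, then ρ(x, t) > 0 and p(x, t) > 0 for all x ∈ ℝ^d and all t ∈ [0, T) — that is, positivity of density and pressure persists even when the divergence-free condition Σ_i ∂_{x_i} B_i = 0 is violated. -/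

import Mathlib

noncomputable section

open Finset

/-- An MHD state `U = (ρ, m, B, E)` viewed as a vector in `ℝ⁸`. -/
abbrev MHDState := Fin 8 → ℝ

namespace MHD

/-- Build a state from density, momentum, magnetic field, total energy. -/
def mk (ρ : ℝ) (m B : Fin 3 → ℝ) (E : ℝ) : MHDState :=
  ![ρ, m 0, m 1, m 2, B 0, B 1, B 2, E]

/-- Density component. -/
def dens (U : MHDState) : ℝ := U 0

/-- Momentum components. -/
def mom (U : MHDState) : Fin 3 → ℝ := ![U 1, U 2, U 3]

/-- Magnetic field components. -/
def magB (U : MHDState) : Fin 3 → ℝ := ![U 4, U 5, U 6]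

/-- Total energy component. -/
def toten (U : MHDState) : ℝ := U 7

/-- Euclidean dot product on `ℝ³`. -/
def dot3 (a b : Fin 3 → ℝ) : ℝ := ∑ k, a k * b k

/-- Squared Euclidean norm on `ℝ³`. -/
def sq3 (a : Fin 3 → ℝ) : ℝ := dot3 a a

/-- Euclidean norm on `ℝ³`. -/
def norm3 (a : Fin 3 → ℝ) : ℝ := Real.sqrt (sq3 a)

/-- Velocity `v = m / ρ`. -/
def vel (U : MHDState) : Fin 3 → ℝ := fun k => mom U k / dens U

/-- Internal energy `𝓔(U) = E − (|m|²/ρ + |B|²)/2`. -/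
def intE (U : MHDState) : ℝ := toten U - (sq3 (mom U) / dens U + sq3 (magB U)) / 2

/-- Specific internal energy `e = 𝓔(U)/ρ`. -/
def specE (U : MHDState) : ℝ := intE U / dens U

/-- The admissible state set `𝒢`. -/
def Gset : Set MHDState := {U | 0 < dens U ∧ 0 < intE U}

/-- The set `𝒢_ρ` of states with positive density. -/
def Grho : Set MHDState := {U | 0 < dens U}

/-- Euclidean dot product on `ℝ⁸`. -/
def dot8 (U V : MHDState) : ℝ := ∑ i, U i * V i

/-- The vector `n* = (|v*|²/2, −v*, −B*, 1)`. -/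
def nstar (vs Bs : Fin 3 → ℝ) : MHDState :=
  mk (sq3 vs / 2) (fun k => -vs k) (fun k => -Bs k) 1

/-- The set `𝒢*`. -/
def GstarSet : Set MHDState :=
  {U | 0 < dens U ∧ ∀ vs Bs : Fin 3 → ℝ, 0 < dot8 U (nstar vs Bs) + sq3 Bs / 2}

/-- Equation of state assumption: for `ρ > 0`, `e > 0 ↔ p(ρ,e) > 0`. -/
def IsEOS (pfun : ℝ → ℝ → ℝ) : Prop :=
  ∀ ρ e : ℝ, 0 < ρ → (0 < e ↔ 0 < pfun ρ e)

/-- Pressure of a state, via the equation of state. -/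
def pres (pfun : ℝ → ℝ → ℝ) (U : MHDState) : ℝ := pfun (dens U) (specE U)

/-- Total pressure `p + |B|²/2`. -/
def ptot (pfun : ℝ → ℝ → ℝ) (U : MHDState) : ℝ := pres pfun U + sq3 (magB U) / 2

/-- The `i`-th flux `F_i(U)`. -/
def flux (pfun : ℝ → ℝ → ℝ) (i : Fin 3) (U : MHDState) : MHDState :=
  mk (dens U * vel U i)
    (fun k => dens U * vel U i * vel U k - magB U i * magB U k
      + ptot pfun U * (if k = i then 1 else 0))
    (fun k => vel U i * magB U k - magB U i * vel U k)
    (vel U i * (toten U + ptot pfun U) - magB U i * dot3 (vel U) (magB U))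

/-- Directional inner product `⟨ξ, w⟩ = Σ_{k<d} ξ_k w_k` for `ξ ∈ ℝ^d`, `w ∈ ℝ³`, `d ≤ 3`. -/
def dirDot {d : ℕ} (hd : d ≤ 3) (ξ : Fin d → ℝ) (w : Fin 3 → ℝ) : ℝ :=
  ∑ k, ξ k * w (Fin.castLE hd k)

/-- Directional flux `⟨ξ, F(U)⟩ = Σ_{i<d} ξ_i F_i(U)`. -/
def dirFlux (pfun : ℝ → ℝ → ℝ) {d : ℕ} (hd : d ≤ 3) (ξ : Fin d → ℝ) (U : MHDState) :
    MHDState :=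
  ∑ i, ξ i • flux pfun (Fin.castLE hd i) U

/-- `ξ` is a unit vector. -/
def unitVec {d : ℕ} (ξ : Fin d → ℝ) : Prop := (∑ k, (ξ k) ^ 2) = 1

/-- `𝒞_s(U) = p / (ρ √(2e))`. -/
def soundC (pfun : ℝ → ℝ → ℝ) (U : MHDState) : ℝ :=
  pres pfun U / (dens U * Real.sqrt (2 * specE U))

/-- `𝒞(U; ξ)`. -/
def waveC (pfun : ℝ → ℝ → ℝ) {d : ℕ} (hd : d ≤ 3) (ξ : Fin d → ℝ) (U : MHDState) : ℝ :=
  Real.sqrt ((soundC pfun U ^ 2 + sq3 (magB U) / dens U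
    + Real.sqrt ((soundC pfun U ^ 2 + sq3 (magB U) / dens U) ^ 2
      - 4 * soundC pfun U ^ 2 * dirDot hd ξ (magB U) ^ 2 / dens U)) / 2)

/-- Roe-type averaged velocity `v̄ = (√ρ v + √ρ̃ ṽ)/(√ρ + √ρ̃)`. -/
def roeV (U Ut : MHDState) : Fin 3 → ℝ := fun k =>
  (Real.sqrt (dens U) * vel U k + Real.sqrt (dens Ut) * vel Ut k)
    / (Real.sqrt (dens U) + Real.sqrt (dens Ut))

/-- `α_r(U, Ũ; ξ)`. -/
def alphaR (pfun : ℝ → ℝ → ℝ) {d : ℕ} (hd : d ≤ 3) (ξ : Fin d → ℝ) (U Ut : MHDState) : ℝ :=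
  max (dirDot hd ξ (vel U)) (dirDot hd ξ (roeV U Ut)) + waveC pfun hd ξ U
    + norm3 (magB U - magB Ut) / (Real.sqrt (dens U) + Real.sqrt (dens Ut))

/-- `α_l(U, Ũ; ξ)`. -/
def alphaL (pfun : ℝ → ℝ → ℝ) {d : ℕ} (hd : d ≤ 3) (ξ : Fin d → ℝ) (U Ut : MHDState) : ℝ :=
  min (dirDot hd ξ (vel U)) (dirDot hd ξ (roeV U Ut)) - waveC pfun hd ξ U
    - norm3 (magB U - magB Ut) / (Real.sqrt (dens U) + Real.sqrt (dens Ut))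

/-- `α_⋆(U, Ũ; ξ)`. -/
def alphaS (pfun : ℝ → ℝ → ℝ) {d : ℕ} (hd : d ≤ 3) (ξ : Fin d → ℝ) (U Ut : MHDState) : ℝ :=
  max (|dirDot hd ξ (vel U)|) (|dirDot hd ξ (roeV U Ut)|) + waveC pfun hd ξ U
    + norm3 (magB U - magB Ut) / (Real.sqrt (dens U) + Real.sqrt (dens Ut))

/-- The vector `θ(U, v*, B*) = 2^{−1/2}(B − B*, √ρ(v − v*), √(2ρe)) ∈ ℝ⁷`. -/
def theta (U : MHDState) (vs Bs : Fin 3 → ℝ) : Fin 7 → ℝ :=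
  ![(magB U 0 - Bs 0) / Real.sqrt 2,
    (magB U 1 - Bs 1) / Real.sqrt 2,
    (magB U 2 - Bs 2) / Real.sqrt 2,
    Real.sqrt (dens U) * (vel U 0 - vs 0) / Real.sqrt 2,
    Real.sqrt (dens U) * (vel U 1 - vs 1) / Real.sqrt 2,
    Real.sqrt (dens U) * (vel U 2 - vs 2) / Real.sqrt 2,
    Real.sqrt (2 * intE U) / Real.sqrt 2]

/-- `|θ|²`. -/
def thetaSq (U : MHDState) (vs Bs : Fin 3 → ℝ) : ℝ := ∑ k, theta U vs Bs k ^ 2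

/-- Godunov–Powell source vector `S(U) = (0, B, v, v·B)`. -/
def source (U : MHDState) : MHDState := mk 0 (magB U) (vel U) (dot3 (vel U) (magB U))

/-- HLL numerical flux with clamped wave speeds `σm ≤ 0 ≤ σp`. -/
def hllFlux (pfun : ℝ → ℝ → ℝ) {d : ℕ} (hd : d ≤ 3) (ξ : Fin d → ℝ)
    (Um Up : MHDState) (σm σp : ℝ) : MHDState :=
  (σp - σm)⁻¹ • (σp • dirFlux pfun hd ξ Um - σm • dirFlux pfun hd ξ Up
    + (σm * σp) • (Up - Um))

/-- HLL intermediate state `H(U⁻, U⁺; ξ)`. -/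
def hllMid (pfun : ℝ → ℝ → ℝ) {d : ℕ} (hd : d ≤ 3) (ξ : Fin d → ℝ)
    (Um Up : MHDState) (σm σp : ℝ) : MHDState :=
  (σp - σm)⁻¹ • (σp • Up - dirFlux pfun hd ξ Up - σm • Um + dirFlux pfun hd ξ Um)

/-- The quantity `α̂_j` of Theorem 2.3. -/
def alphaHat (pfun : ℝ → ℝ → ℝ) {d : ℕ} (hd : d ≤ 3) {N : ℕ}
    (s : Fin N → ℝ) (ξ : Fin N → Fin d → ℝ) (U : Fin N → MHDState) (j : Fin N) : ℝ :=
  max (dirDot hd (ξ j) (vel (U j)))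
      ((∑ i, s i)⁻¹ * ∑ i, s i * dirDot hd (fun k => ξ j k - ξ i k) (roeV (U j) (U i)))
  + waveC pfun hd (ξ j) (U j)
  + 2 * (∑ i, s i)⁻¹ * ∑ i, s i *
      (norm3 (magB (U j) - magB (U i)) / (Real.sqrt (dens (U j)) + Real.sqrt (dens (U i))))

def d1le3 : (1 : ℕ) ≤ 3 := by omega
def d2le3 : (2 : ℕ) ≤ 3 := by omega

/-- In one dimension the direction `ξ = 1`. -/
def xi1 : Fin 1 → ℝ := fun _ => 1

theorem vel_mk {r E : ℝ} (hr : r ≠ 0) (v b : Fin 3 → ℝ) :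
    vel (mk r (fun k => r * v k) b E) = v := by
  funext k
  fin_cases k <;> simp [vel, mk, mom, dens, hr]

theorem magB_mk (r E : ℝ) (m b : Fin 3 → ℝ) : magB (mk r m b E) = b := by
  funext k
  fin_cases k <;> simp [magB, mk]

theorem ptot_mk {γ r : ℝ} (hγ : γ - 1 ≠ 0) (hr : r ≠ 0) (p : ℝ) (v b : Fin 3 → ℝ) :
    ptot (fun r e => (γ - 1) * r * e)
      (mk r (fun k => r * v k) b (r * sq3 v / 2 + sq3 b / 2 + p / (γ - 1)))
      = p + sq3 b / 2 := by
  rw [ptot, magB_mk]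
  simp only [pres, specE, intE, magB_mk]
  simp only [toten, dens, mom, mk, sq3, dot3, Fin.sum_univ_three]
  simp
  field_simp
  ring

/-- The flux of a state with nonzero density, in primitive variables. -/
theorem flux_mk {γ r : ℝ} (hγ : γ - 1 ≠ 0) (hr : r ≠ 0) (p : ℝ) (v b : Fin 3 → ℝ) (i : Fin 3) :
    flux (fun r e => (γ - 1) * r * e) i
      (mk r (fun k => r * v k) b (r * sq3 v / 2 + sq3 b / 2 + p / (γ - 1)))
      = mk (r * v i)
        (fun k => r * v i * v k - b i * b k + (p + sq3 b / 2) * (if k = i then 1 else 0))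
        (fun k => v i * b k - b i * v k)
        (v i * (r * sq3 v / 2 + sq3 b / 2 + p / (γ - 1) + (p + sq3 b / 2)) - b i * dot3 v b) := by
  rw [flux, ptot_mk hγ hr, magB_mk, vel_mk hr]
  simp [dens, toten, mk]

section Derivation

variable {F : Type*} [NormedAddCommGroup F] [NormedSpace ℝ F] {r p : F → ℝ}
  {v b : F → Fin 3 → ℝ} {x : F}

theorem dot8_nstar_fderiv_state (c : ℝ) (hr : DifferentiableAt ℝ r x)
    (hp : DifferentiableAt ℝ p x) (hv : ∀ k, DifferentiableAt ℝ (fun y => v y k) x)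
    (hb : ∀ k, DifferentiableAt ℝ (fun y => b y k) x) (e : F) :
    dot8 (nstar (v x) (b x)) (fun a => fderiv ℝ (fun y =>
      mk (r y) (fun k => r y * v y k) (b y)
        (r y * sq3 (v y) / 2 + sq3 (b y) / 2 + p y / c) a) x e)
      = fderiv ℝ p x e / c := by
  have hv0 := (hv 0).hasFDerivAt
  have hv1 := (hv 1).hasFDerivAt
  have hv2 := (hv 2).hasFDerivAt
  have hb0 := (hb 0).hasFDerivAt
  have hb1 := (hb 1).hasFDerivAt
  have hb2 := (hb 2).hasFDerivAt
  have hr' := hr.hasFDerivAt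
  have hp' := hp.hasFDerivAt
  have h7 := (((hr'.fun_mul (((hv0.fun_mul hv0).fun_add (hv1.fun_mul hv1)).fun_add
    (hv2.fun_mul hv2))).mul_const (2⁻¹)).fun_add
    ((((hb0.fun_mul hb0).fun_add (hb1.fun_mul hb1)).fun_add (hb2.fun_mul hb2)).mul_const
      (2⁻¹))).fun_add (hp'.mul_const c⁻¹)
  simp only [dot8, nstar, mk, Fin.sum_univ_eight, sq3, dot3, Fin.sum_univ_three,
    div_eq_mul_inv]
  simp only [Matrix.cons_val]
  rw [h7.fderiv, (hr'.fun_mul hv0).fderiv, (hr'.fun_mul hv1).fderiv, (hr'.fun_mul hv2).fderiv]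
  simp only [add_apply, smul_apply, smul_eq_mul]
  ring

theorem dot8_nstar_fderiv_flux {c : ℝ} (hc : c ≠ 0) (hr : DifferentiableAt ℝ r x)
    (hp : DifferentiableAt ℝ p x) (hv : ∀ k, DifferentiableAt ℝ (fun y => v y k) x)
    (hb : ∀ k, DifferentiableAt ℝ (fun y => b y k) x) (e : F) (i : Fin 3) :
    dot8 (nstar (v x) (b x)) (fun a => fderiv ℝ (fun y =>
      mk (r y * v y i)
        (fun k => r y * v y i * v y k - b y i * b y k
          + (p y + sq3 (b y) / 2) * (if k = i then 1 else 0))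
        (fun k => v y i * b y k - b y i * v y k)
        (v y i * (r y * sq3 (v y) / 2 + sq3 (b y) / 2 + p y / c + (p y + sq3 (b y) / 2))
          - b y i * dot3 (v y) (b y)) a) x e)
      = (v x i * fderiv ℝ p x e + (c + 1) * p x * fderiv ℝ (fun y => v y i) x e) / c
        + fderiv ℝ (fun y => b y i) x e * dot3 (v x) (b x) := by
  have hV := fun k => (hv k).hasFDerivAt
  have hB := fun k => (hb k).hasFDerivAt
  have hR := hr.hasFDerivAt
  have hP := hp.hasFDerivAt
  have hsv := ((((hV 0).fun_mul (hV 0)).fun_add ((hV 1).fun_mul (hV 1))).fun_add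
    ((hV 2).fun_mul (hV 2)))
  have hsb := ((((hB 0).fun_mul (hB 0)).fun_add ((hB 1).fun_mul (hB 1))).fun_add
    ((hB 2).fun_mul (hB 2)))
  have hvb := ((((hV 0).fun_mul (hB 0)).fun_add ((hV 1).fun_mul (hB 1))).fun_add
    ((hV 2).fun_mul (hB 2)))
  have hpt := hP.fun_add (hsb.mul_const (2⁻¹))
  have hE := (((hV i).fun_mul (((((hR.fun_mul hsv).mul_const (2⁻¹)).fun_add
    (hsb.mul_const (2⁻¹))).fun_add (hP.mul_const c⁻¹)).fun_add hpt)).fun_sub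
    ((hB i).fun_mul hvb))
  have hM := fun k => (((((hR.fun_mul (hV i)).fun_mul (hV k)).fun_sub
    ((hB i).fun_mul (hB k))).fun_add (hpt.mul_const (if k = i then 1 else 0))))
  have hI := fun k => ((hV i).fun_mul (hB k)).fun_sub ((hB i).fun_mul (hV k))
  simp only [dot8, nstar, mk, Fin.sum_univ_eight, sq3, dot3, Fin.sum_univ_three,
    div_eq_mul_inv]
  simp only [Matrix.cons_val]
  rw [hE.fderiv, (hM 0).fderiv, (hM 1).fderiv, (hM 2).fderiv, (hI 0).fderiv, (hI 1).fderiv,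
    (hI 2).fderiv, (hR.fun_mul (hV i)).fderiv]
  simp only [add_apply, sub_apply, smul_apply, smul_eq_mul]
  fin_cases i <;> simp <;> field_simp <;> ring

theorem dot8_nstar_source {ρ E : ℝ} (hρ : ρ ≠ 0) (v b : Fin 3 → ℝ) :
    dot8 (nstar v b) (source (mk ρ (fun k => ρ * v k) b E)) = -dot3 v b := by
  rw [source, magB_mk, vel_mk hρ]
  simp only [dot8, nstar, mk, Fin.sum_univ_eight, dot3, Fin.sum_univ_three]
  simp only [Matrix.cons_val]
  ring

end Derivation

/-- A Grönwall-type positivity criterion. -/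
theorem pos_of_forall_pos_neg_mul_le_deriv {t C : ℝ} {g : ℝ → ℝ}
    (hg : ContinuousOn g (Set.Icc 0 t)) (h0 : 0 < g 0)
    (hd : ∀ s ∈ Set.Ioo 0 t, 0 < g s → ∃ g', HasDerivAt g g' s ∧ -C * g s ≤ g') :
    ∀ s ∈ Set.Icc 0 t, 0 < g s := by
  by_contra! hcon
  obtain ⟨s₁, hs₁, hgs₁⟩ := hcon
  set Z : Set ℝ := Set.Icc 0 t ∩ g ⁻¹' Set.Iic 0 with hZ
  have hZc : IsCompact Z :=
    isCompact_Icc.of_isClosed_subset (hg.preimage_isClosed_of_isClosed isClosed_Icc isClosed_Iic)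
      Set.inter_subset_left
  obtain ⟨s₀, ⟨hs₀, hgs₀⟩, hmin⟩ := hZc.exists_isLeast ⟨s₁, hs₁, hgs₁⟩
  have hpos : ∀ s ∈ Set.Ico 0 s₀, 0 < g s := fun s hs => by
    by_contra! h
    exact absurd (hmin ⟨⟨hs.1, hs.2.le.trans hs₀.2⟩, h⟩) (not_le.2 hs.2)
  have hd' : ∀ s ∈ Set.Ioo 0 s₀, ∃ h', HasDerivAt (fun s => g s * Real.exp (C * s)) h' s ∧
      0 ≤ h' := fun s hs => by
    obtain ⟨g', hg', hle⟩ := hd s ⟨hs.1, hs.2.trans_le hs₀.2⟩ (hpos s ⟨hs.1.le, hs.2⟩)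
    refine ⟨_, hg'.mul (((hasDerivAt_id s).const_mul C).exp), ?_⟩
    have := Real.exp_pos (C * s)
    simp only [id]
    nlinarith
  have hmono : MonotoneOn (fun s => g s * Real.exp (C * s)) (Set.Icc 0 s₀) := by
    refine monotoneOn_of_deriv_nonneg (convex_Icc _ _)
      ((hg.mono (Set.Icc_subset_Icc_right hs₀.2)).mul (by fun_prop)) ?_ ?_ <;>
      rw [interior_Icc] <;> intro s hs <;> obtain ⟨h', hh, hh0⟩ := hd' s hs
    · exact hh.differentiableAt.differentiableWithinAt
    · rwa [hh.deriv]
  have := hmono (Set.left_mem_Icc.2 hs₀.1) (Set.right_mem_Icc.2 hs₀.1) hs₀.1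
  have h2 := Real.exp_pos (C * s₀)
  have hgs₀' : g s₀ ≤ 0 := hgs₀
  simp only [mul_zero, Real.exp_zero, mul_one] at this
  nlinarith

section Balance

variable {d : ℕ} {hd : d ≤ 3} {γ : ℝ} {ρf pf : (Fin d → ℝ) → ℝ → ℝ}
  {vf Bf : (Fin d → ℝ) → ℝ → Fin 3 → ℝ} {Uf : (Fin d → ℝ) → ℝ → MHDState}
  {x : Fin d → ℝ} {t : ℝ}

/-- Mass and pressure balance in primitive variables, at a point of nonzero density. -/
theorem mass_and_pressure_balance (hγ : γ - 1 ≠ 0)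
    (hUf : ∀ x t, Uf x t =
      mk (ρf x t) (fun k => ρf x t * vf x t k) (Bf x t)
        (ρf x t * sq3 (vf x t) / 2 + sq3 (Bf x t) / 2 + pf x t / (γ - 1)))
    (hρ : DifferentiableAt ℝ (fun q : (Fin d → ℝ) × ℝ => ρf q.1 q.2) (x, t))
    (hp : DifferentiableAt ℝ (fun q : (Fin d → ℝ) × ℝ => pf q.1 q.2) (x, t))
    (hv : ∀ k, DifferentiableAt ℝ (fun q : (Fin d → ℝ) × ℝ => vf q.1 q.2 k) (x, t))
    (hB : ∀ k, DifferentiableAt ℝ (fun q : (Fin d → ℝ) × ℝ => Bf q.1 q.2 k) (x, t))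
    (hPDE : ∀ a : Fin 8,
      deriv (fun s => Uf x s a) t
        + (∑ i : Fin d,
            fderiv ℝ
              (fun y => flux (fun r e => (γ - 1) * r * e) (Fin.castLE hd i) (Uf y t) a)
              x (Pi.single i 1))
      = -(∑ i : Fin d,
            fderiv ℝ (fun y => Bf y t (Fin.castLE hd i)) x (Pi.single i 1)) *
          source (Uf x t) a)
    (hne : ρf x t ≠ 0) :
    (deriv (ρf x) t + ∑ i : Fin d, vf x t (Fin.castLE hd i) *
        fderiv ℝ (fun y => ρf y t) x (Pi.single i 1)
      = -(∑ i : Fin d, fderiv ℝ (fun y => vf y t (Fin.castLE hd i)) x (Pi.single i 1)) *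
          ρf x t) ∧
    (deriv (pf x) t + ∑ i : Fin d, vf x t (Fin.castLE hd i) *
        fderiv ℝ (fun y => pf y t) x (Pi.single i 1)
      = -(∑ i : Fin d, fderiv ℝ (fun y => vf y t (Fin.castLE hd i)) x (Pi.single i 1)) *
          (γ * pf x t)) := by
  have space : ∀ {f : (Fin d → ℝ) × ℝ → ℝ}, DifferentiableAt ℝ f (x, t) →
      DifferentiableAt ℝ (fun y => f (y, t)) x := fun hf =>
    DifferentiableAt.comp (f := fun y => (y, t)) x hf (by fun_prop)
  have time : ∀ {f : (Fin d → ℝ) × ℝ → ℝ}, DifferentiableAt ℝ f (x, t) →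
      DifferentiableAt ℝ (fun s => f (x, s)) t := fun hf =>
    DifferentiableAt.comp (f := fun s => (x, s)) t hf (by fun_prop)
  have hflux : ∀ (i : Fin 3) (a : Fin 8),
      fderiv ℝ (fun y => flux (fun r e => (γ - 1) * r * e) i (Uf y t) a) x
      = fderiv ℝ (fun y => mk (ρf y t * vf y t i)
        (fun k => ρf y t * vf y t i * vf y t k - Bf y t i * Bf y t k
          + (pf y t + sq3 (Bf y t) / 2) * (if k = i then 1 else 0))
        (fun k => vf y t i * Bf y t k - Bf y t i * vf y t k)
        (vf y t i * (ρf y t * sq3 (vf y t) / 2 + sq3 (Bf y t) / 2 + pf y t / (γ - 1)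
          + (pf y t + sq3 (Bf y t) / 2)) - Bf y t i * dot3 (vf y t) (Bf y t)) a) x :=
    fun i a => by
      refine Filter.EventuallyEq.fderiv_eq ?_
      filter_upwards [(space hρ).continuousAt.eventually_ne hne] with y hy
      rw [hUf, flux_mk hγ hy]
  constructor
  · have h := hPDE 0
    simp only [hflux] at h
    simp only [hUf, source, mk, Matrix.cons_val_zero, mul_zero] at h
    have hmul : ∀ i : Fin 3, fderiv ℝ (fun y => ρf y t * vf y t i) x = _ := fun i =>
      ((space hρ).hasFDerivAt.fun_mul (space (hv i)).hasFDerivAt).fderiv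
    simp only [hmul, add_apply, smul_apply, smul_eq_mul, Finset.sum_add_distrib,
      ← Finset.mul_sum] at h
    linear_combination h
  · have hw : dot8 (nstar (vf x t) (Bf x t)) (fun a => deriv (fun s => Uf x s a) t)
        + ∑ i : Fin d, dot8 (nstar (vf x t) (Bf x t)) (fun a => fderiv ℝ
            (fun y => flux (fun r e => (γ - 1) * r * e) (Fin.castLE hd i) (Uf y t) a)
              x (Pi.single i 1))
        = -(∑ i : Fin d, fderiv ℝ (fun y => Bf y t (Fin.castLE hd i)) x (Pi.single i 1)) *
          dot8 (nstar (vf x t) (Bf x t)) (source (Uf x t)) := by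
      simp only [dot8]
      rw [Finset.sum_comm, ← Finset.sum_add_distrib, Finset.mul_sum]
      refine Finset.sum_congr rfl fun a _ => ?_
      rw [← Finset.mul_sum]
      linear_combination nstar (vf x t) (Bf x t) a * hPDE a
    simp only [hflux] at hw
    simp only [hUf] at hw
    rw [dot8_nstar_source hne] at hw
    have hstate := dot8_nstar_fderiv_state (γ - 1) (time hρ) (time hp)
      (fun k => time (hv k)) (fun k => time (hB k)) 1
    simp only [fderiv_apply_one_eq_deriv] at hstate
    rw [hstate] at hw
    have hfl := fun i : Fin d => dot8_nstar_fderiv_flux hγ (space hρ) (space hp)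
      (fun k => space (hv k)) (fun k => space (hB k)) (Pi.single i 1) (Fin.castLE hd i)
    simp only [hfl, Finset.sum_add_distrib, ← Finset.sum_div, ← Finset.sum_mul,
      ← Finset.mul_sum] at hw
    field_simp at hw
    linear_combination hw

/-- The derivative along a curve `s ↦ (X s, s)`, as a material derivative. -/
theorem hasDerivAt_along_curve {f : (Fin d → ℝ) → ℝ → ℝ} {X : ℝ → Fin d → ℝ} {w : Fin d → ℝ}
    (hf : DifferentiableAt ℝ (fun q : (Fin d → ℝ) × ℝ => f q.1 q.2) (X t, t))
    (hX : HasDerivAt X w t) :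
    HasDerivAt (fun s => f (X s) s) (deriv (f (X t)) t +
      ∑ i, w i * fderiv ℝ (fun y => f y t) (X t) (Pi.single i 1)) t := by
  have hspace : HasFDerivAt (fun y => f y t) _ (X t) :=
    HasFDerivAt.comp (g := fun q : (Fin d → ℝ) × ℝ => f q.1 q.2) (f := fun y => (y, t)) (X t)
      hf.hasFDerivAt (hasFDerivAt_prodMk_left (X t) t)
  have htime : HasDerivAt (f (X t)) _ t :=
    HasFDerivAt.comp_hasDerivAt (l := fun q : (Fin d → ℝ) × ℝ => f q.1 q.2) t
      (f := fun s => (X t, s)) hf.hasFDerivAt ((hasDerivAt_const t (X t)).prodMk (hasDerivAt_id t))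
  have h := HasFDerivAt.comp_hasDerivAt (l := fun q : (Fin d → ℝ) × ℝ => f q.1 q.2) t
    (f := fun s => (X s, s)) hf.hasFDerivAt (hX.prodMk (hasDerivAt_id t))
  refine h.congr_deriv ?_
  rw [hspace.fderiv, htime.deriv]
  set L := fderiv ℝ (fun q : (Fin d → ℝ) × ℝ => f q.1 q.2) (X t, t)
  have hsum : (w, (1 : ℝ)) = (0, 1) + ∑ i, w i • ((Pi.single i 1 : Fin d → ℝ), (0 : ℝ)) := by
    ext j
    · simp [Prod.fst_sum, Finset.sum_apply, Pi.single_apply]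
    · simp [Prod.snd_sum]
  simp only [hsum, map_add, map_sum, map_smul, smul_eq_mul, ContinuousLinearMap.comp_apply,
    ContinuousLinearMap.inl_apply]

end Balance

/-- Characteristics of a bounded `C¹` vector field exist backwards from any point down to time `0`. -/
theorem exists_characteristic {d : ℕ} {t M : ℝ} (ht : 0 < t)
    {W : (Fin d → ℝ) × ℝ → Fin d → ℝ}
    (hW : ContDiffOn ℝ 1 W {q | q.2 ∈ Set.Icc 0 t})
    (hM : ∀ q : (Fin d → ℝ) × ℝ, q.2 ∈ Set.Icc 0 t → ‖W q‖ ≤ M) (x : Fin d → ℝ) :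
    ∃ X : ℝ → Fin d → ℝ, X t = x ∧
      ∀ s ∈ Set.Icc 0 t, HasDerivWithinAt X (W (X s, s)) (Set.Icc 0 t) s := by
  have hM0 : 0 ≤ M := (norm_nonneg _).trans (hM (x, 0) ⟨le_rfl, ht.le⟩)
  set a : NNReal := ⟨M * t, by positivity⟩ with ha
  have hsub : Metric.closedBall x a ×ˢ Set.Icc 0 t ⊆ {q : (Fin d → ℝ) × ℝ | q.2 ∈ Set.Icc 0 t} :=
    fun q hq => hq.2
  obtain ⟨K, hK⟩ := (hW.mono hsub).exists_lipschitzOnWith one_ne_zero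
    ((convex_closedBall x a).prod (convex_Icc 0 t)) ((isCompact_closedBall x a).prod isCompact_Icc)
  have hPL : IsPicardLindelof (fun s y => W (y, s)) (⟨t, ht.le, le_rfl⟩ : Set.Icc 0 t) x a 0
      ⟨M, hM0⟩ K := by
    refine ⟨fun s hs => ?_, fun y hy => ?_, fun s hs y _ => hM (y, s) hs, ?_⟩
    · intro y hy z hz
      simpa [Prod.edist_eq] using hK (x := (y, s)) ⟨hy, hs⟩ (y := (z, s)) ⟨hz, hs⟩
    · exact hW.continuousOn.comp (by fun_prop) fun s hs => hs
    · simp only [sub_self, sub_zero, max_eq_right ht.le, NNReal.coe_zero]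
      exact le_rfl
  exact hPL.exists_eq_forall_mem_Icc_hasDerivWithinAt₀

/-- Appendix A: positivity of strong (classical C¹) solutions of the
symmetrizable (Godunov) MHD system with the ideal EOS `p = (γ−1)ρe`,
even without the divergence-free constraint.  Time horizon `T ∈ EReal`
allows `T = ∞`. -/
theorem strong_solution_positivity
    {d : ℕ} (hd1 : 1 ≤ d) (hd : d ≤ 3)
    (γ : ℝ) (hγ : 1 < γ)
    (T : EReal) (hT : 0 < T)
    (ρf pf : (Fin d → ℝ) → ℝ → ℝ)
    (vf Bf : (Fin d → ℝ) → ℝ → Fin 3 → ℝ)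
    (Uf : (Fin d → ℝ) → ℝ → MHDState)
    (hUf : ∀ x t, Uf x t =
      mk (ρf x t) (fun k => ρf x t * vf x t k) (Bf x t)
        (ρf x t * sq3 (vf x t) / 2 + sq3 (Bf x t) / 2 + pf x t / (γ - 1)))
    -- C¹ regularity of ρ, v, B, p on ℝ^d × [0, T)
    (hρreg : ContDiffOn ℝ 1 (fun q : (Fin d → ℝ) × ℝ => ρf q.1 q.2)
      {q : (Fin d → ℝ) × ℝ | 0 ≤ q.2 ∧ (q.2 : EReal) < T})
    (hvreg : ∀ k, ContDiffOn ℝ 1 (fun q : (Fin d → ℝ) × ℝ => vf q.1 q.2 k)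
      {q : (Fin d → ℝ) × ℝ | 0 ≤ q.2 ∧ (q.2 : EReal) < T})
    (hBreg : ∀ k, ContDiffOn ℝ 1 (fun q : (Fin d → ℝ) × ℝ => Bf q.1 q.2 k)
      {q : (Fin d → ℝ) × ℝ | 0 ≤ q.2 ∧ (q.2 : EReal) < T})
    (hpreg : ContDiffOn ℝ 1 (fun q : (Fin d → ℝ) × ℝ => pf q.1 q.2)
      {q : (Fin d → ℝ) × ℝ | 0 ≤ q.2 ∧ (q.2 : EReal) < T})
    -- v bounded on ℝ^d × [0, τ] for every 0 ≤ τ < T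
    (hvbdd : ∀ τ : ℝ, 0 ≤ τ → (τ : EReal) < T →
      ∃ M : ℝ, ∀ x, ∀ t ∈ Set.Icc (0 : ℝ) τ, norm3 (vf x t) ≤ M)
    -- the symmetrizable (Godunov) MHD system holds classically on ℝ^d × (0, T)
    (hPDE : ∀ x : Fin d → ℝ, ∀ t : ℝ, 0 < t → (t : EReal) < T → ∀ a : Fin 8,
      deriv (fun s => Uf x s a) t
        + (∑ i : Fin d,
            fderiv ℝ
              (fun y => flux (fun r e => (γ - 1) * r * e) (Fin.castLE hd i) (Uf y t) a)
              x (Pi.single i 1))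
      = -(∑ i : Fin d,
            fderiv ℝ (fun y => Bf y t (Fin.castLE hd i)) x (Pi.single i 1)) *
          source (Uf x t) a)
    -- initial positivity
    (hinit : ∀ x, 0 < ρf x 0 ∧ 0 < pf x 0) :
    ∀ x, ∀ t : ℝ, 0 ≤ t → (t : EReal) < T → 0 < ρf x t ∧ 0 < pf x t := by
  have hγ1 : γ - 1 ≠ 0 := by linarith
  intro x t ht htT
  rcases ht.eq_or_lt with rfl | ht0
  · exact hinit x
  set S : Set ((Fin d → ℝ) × ℝ) := {q | 0 ≤ q.2 ∧ (q.2 : EReal) < T}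
  have hSt : ∀ q : (Fin d → ℝ) × ℝ, q.2 ∈ Set.Icc 0 t → q ∈ S := fun q hq =>
    ⟨hq.1, (EReal.coe_le_coe_iff.2 hq.2).trans_lt htT⟩
  have hSnhds : ∀ q : (Fin d → ℝ) × ℝ, q.2 ∈ Set.Ioo 0 t → S ∈ nhds q := fun q hq =>
    Filter.mem_of_superset ((isOpen_Ioo.preimage continuous_snd).mem_nhds hq)
      fun q' hq' => hSt q' ⟨le_of_lt hq'.1, le_of_lt hq'.2⟩
  have hSconv : Convex ℝ S := by
    have hord : Set.OrdConnected {s : ℝ | 0 ≤ s ∧ (s : EReal) < T} :=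
      ⟨fun a ha b hb c hc => ⟨ha.1.trans hc.1, (EReal.coe_le_coe_iff.2 hc.2).trans_lt hb.2⟩⟩
    exact hord.convex.linear_preimage (LinearMap.snd ℝ (Fin d → ℝ) ℝ)
  have hSunique : UniqueDiffOn ℝ S := uniqueDiffOn_convex hSconv
    ⟨(x, t / 2), mem_interior_iff_mem_nhds.2 (hSnhds _ ⟨by simpa, by simpa⟩)⟩
  obtain ⟨M, hM⟩ := hvbdd t ht htT
  have hcomp : ∀ (y : Fin d → ℝ), ∀ s ∈ Set.Icc 0 t, ∀ k, |vf y s k| ≤ M := fun y s hs k =>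
    (Real.abs_le_sqrt (by
      simp only [sq3, dot3, ← sq]
      exact Finset.single_le_sum (f := fun k => vf y s k ^ 2) (fun _ _ => sq_nonneg _)
        (Finset.mem_univ k))).trans (hM y s hs)
  obtain ⟨X, hXt, hX⟩ := exists_characteristic
    (W := fun q i => vf q.1 q.2 (Fin.castLE hd i)) (M := M) ht0
    (contDiffOn_pi.2 fun i => (hvreg _).mono hSt)
    (fun q hq => (pi_norm_le_iff_of_nonneg
      ((abs_nonneg _).trans (hcomp q.1 q.2 hq 0))).2 fun i => hcomp _ _ hq _) x
  have hXcont : ContinuousOn (fun s => (X s, s)) (Set.Icc 0 t) :=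
    ContinuousOn.prodMk (fun s hs => (hX s hs).continuousWithinAt) continuousOn_id
  have hXS : Set.MapsTo (fun s => (X s, s)) (Set.Icc 0 t) S := fun s hs => hSt _ hs
  have hdiff : ∀ {f : (Fin d → ℝ) × ℝ → ℝ}, ContDiffOn ℝ 1 f S → ∀ s ∈ Set.Ioo 0 t,
      DifferentiableAt ℝ f (X s, s) := fun hf s hs =>
    (hf.contDiffAt (hSnhds _ hs)).differentiableAt one_ne_zero
  set div : ℝ → ℝ := fun s =>
    ∑ i : Fin d, fderiv ℝ (fun y => vf y s (Fin.castLE hd i)) (X s) (Pi.single i 1)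
  obtain ⟨C, hC⟩ : ∃ C, ∀ s ∈ Set.Ioo 0 t, |div s| ≤ C := by
    obtain ⟨C, hC⟩ := isCompact_Icc.exists_bound_of_continuousOn (s := Set.Icc 0 t)
      (f := fun s => ∑ i : Fin d, fderivWithin ℝ
        (fun q : (Fin d → ℝ) × ℝ => vf q.1 q.2 (Fin.castLE hd i)) S (X s, s) (Pi.single i 1, 0))
      (continuousOn_finsetSum _ fun i _ =>
        (((hvreg _).continuousOn_fderivWithin hSunique le_rfl).comp hXcont hXS).clm_apply
          continuousOn_const)
    refine ⟨C, fun s hs => ?_⟩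
    convert hC s (Set.Ioo_subset_Icc_self hs) using 1
    rw [Real.norm_eq_abs]
    congr 1
    refine Finset.sum_congr rfl fun i _ => ?_
    rw [fderivWithin_of_mem_nhds (hSnhds _ hs)]
    have h : HasFDerivAt (fun y => vf y s (Fin.castLE hd i)) _ (X s) :=
      HasFDerivAt.comp (g := fun q : (Fin d → ℝ) × ℝ => vf q.1 q.2 (Fin.castLE hd i))
        (f := fun y => (y, s)) (X s) (hdiff (hvreg _) s hs).hasFDerivAt
        (hasFDerivAt_prodMk_left (X s) s)
    rw [h.fderiv]
    simp
  have hbal := fun s (hs : s ∈ Set.Ioo 0 t) => mass_and_pressure_balance (hd := hd) hγ1 hUf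
    (hdiff hρreg s hs) (hdiff hpreg s hs) (fun k => hdiff (hvreg k) s hs)
    (fun k => hdiff (hBreg k) s hs)
    (hPDE (X s) s hs.1 ((EReal.coe_lt_coe_iff.2 hs.2).trans htT))
  have hXd := fun s (hs : s ∈ Set.Ioo 0 t) =>
    (hX s (Set.Ioo_subset_Icc_self hs)).hasDerivAt (Icc_mem_nhds hs.1 hs.2)
  have hρpos : ∀ s ∈ Set.Icc 0 t, 0 < ρf (X s) s := by
    refine pos_of_forall_pos_neg_mul_le_deriv (C := C) (hρreg.continuousOn.comp hXcont hXS)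
      (hinit _).1 fun s hs hpos => ⟨_, hasDerivAt_along_curve (hdiff hρreg s hs) (hXd s hs), ?_⟩
    rw [(hbal s hs hpos.ne').1]
    exact mul_le_mul_of_nonneg_right (neg_le_neg (le_of_abs_le (hC s hs))) hpos.le
  have hppos : ∀ s ∈ Set.Icc 0 t, 0 < pf (X s) s := by
    refine pos_of_forall_pos_neg_mul_le_deriv (C := C * γ) (hpreg.continuousOn.comp hXcont hXS)
      (hinit _).2 fun s hs hpos => ⟨_, hasDerivAt_along_curve (hdiff hpreg s hs) (hXd s hs), ?_⟩
    rw [(hbal s hs (hρpos s (Set.Ioo_subset_Icc_self hs)).ne').2, ← neg_mul, mul_assoc]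
    exact mul_le_mul_of_nonneg_right (neg_le_neg (le_of_abs_le (hC s hs)))
      (mul_nonneg (by linarith) hpos.le)
  have htmem : t ∈ Set.Icc 0 t := ⟨ht, le_rfl⟩
  exact hXt ▸ ⟨hρpos t htmem, hppos t htmem⟩
end MHD
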